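/- Let p ∈ (0,1) be fixed. Then with high probability sat(G(n,p), K_{1,2}) = ⌈(n − α(G(n,p)))/2⌉, where α(G) denotes the independence number of G. -/

import Mathlib

open MeasureTheory Filter Real

/-- The index type of potential edges of a graph on `Fin n`. -/
abbrev EdgeType (n : ℕ) := {e : Sym2 (Fin n) // ¬ e.IsDiag}

/-- The product Bernoulli measure on edge-indicator functions: the binomial
random graph `G(n,p)`. -/
noncomputable def erMeasure (n : ℕ) (p : ℝ) : Measure (EdgeType n → Bool) :=
  Measure.pi fun _ => (PMF.bernoulli (min (Real.toNNReal p) 1) (min_le_right _ _)).toMeasure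

/-- The simple graph determined by an edge-indicator function. -/
def graphOf {n : ℕ} (ω : EdgeType n → Bool) : SimpleGraph (Fin n) :=
  SimpleGraph.fromEdgeSet {e | ∃ h : ¬ e.IsDiag, ω ⟨e, h⟩ = true}

/-- `H` contains a (not necessarily induced) copy of `F`. -/
def ContainsCopy {α β : Type*} (F : SimpleGraph α) (H : SimpleGraph β) : Prop :=
  ∃ f : α → β, Function.Injective f ∧ ∀ ⦃a b⦄, F.Adj a b → H.Adj (f a) (f b)

/-- `H` is `F`-saturated in `G`: `H` is a spanning subgraph of `G` that is `F`-free,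
and adding any edge of `G` missing from `H` creates a copy of `F`. -/
def IsSaturatedIn {V : Type*} {α : Type*} (G H : SimpleGraph V) (F : SimpleGraph α) : Prop :=
  H ≤ G ∧ ¬ ContainsCopy F H ∧
    ∀ v w : V, G.Adj v w → ¬ H.Adj v w →
      ContainsCopy F (H ⊔ SimpleGraph.fromEdgeSet {s(v, w)})

/-- The saturation number `sat(G,F)`: the minimum number of edges of an
`F`-saturated spanning subgraph of `G`. -/
noncomputable def satNum {V α : Type*} (G : SimpleGraph V) (F : SimpleGraph α) : ℕ :=
  sInf {k | ∃ H : SimpleGraph V, IsSaturatedIn G H F ∧ H.edgeSet.ncard = k}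

/-- The cycle `C_m`, as a graph on `ZMod m`. -/
def cycGraph (m : ℕ) : SimpleGraph (ZMod m) :=
  SimpleGraph.fromRel (fun a b => a = b + 1)

/-- The independence number of a graph: the maximum size of an independent set. -/
noncomputable def indepNum {V : Type*} (G : SimpleGraph V) : ℕ :=
  sSup {k | ∃ s : Set V, (s.Pairwise fun a b => ¬ G.Adj a b) ∧ s.ncard = k}

/-!
A `P₃`-saturated subgraph of `G` is a matching `M` whose uncovered vertices are independent in `G`,
so `2 * |M| ≥ |V| - α(G)`. For equality, remove from `V` a maximum independent set, or all but one
of its vertices if the parity requires it; what remains has an even number of vertices and should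
have a perfect matching.

By Tutte's theorem it does as soon as `G` has no bipartite hole of size `k` (two disjoint `k`-sets
with no edge between them) and all degrees are at least `5 * k`. Such a `G` has no independent set
of `2 * k` vertices, so deleting any set `S` leaves fewer than `2 * k` components. Hence `S` can
only violate Tutte's condition if `|S| < 2 * k`, but then the degrees left over force the rest to be
connected, and evenness rules out `S = ∅`. In `G(n, p)` both requirements hold with high probability
for `k` of order `√n`, by the union bound.
-/

section Saturation

variable {V : Type*} {G H : SimpleGraph V}

theorem containsCopy_pathGraph_three_iff :
    ContainsCopy (SimpleGraph.pathGraph 3) H ↔ ∃ v, (H.neighborSet v).Nontrivial := by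
  constructor
  · rintro ⟨f, hf, hadj⟩
    exact ⟨f 1, f 0, (hadj (by simp [SimpleGraph.pathGraph_adj])).symm, f 2,
      hadj (by simp [SimpleGraph.pathGraph_adj]), hf.ne (by decide)⟩
  · rintro ⟨v, a, hva : H.Adj v a, b, hvb : H.Adj v b, hab⟩
    refine ⟨![a, v, b], ?_, ?_⟩
    · have := hva.ne
      have := hvb.ne
      intro i j hij
      fin_cases i <;> fin_cases j <;> simp_all
    · intro i j hij
      rw [SimpleGraph.pathGraph_adj] at hij
      fin_cases i <;> fin_cases j <;> simp_all [SimpleGraph.adj_comm]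

theorem containsCopy_pathGraph_three_sup_edge_iff {v w : V}
    (hH : ∀ u, (H.neighborSet u).Subsingleton) (hne : v ≠ w) (hvw : ¬ H.Adj v w) :
    ContainsCopy (SimpleGraph.pathGraph 3) (H ⊔ SimpleGraph.fromEdgeSet {s(v, w)}) ↔
      v ∈ H.support ∨ w ∈ H.support := by
  simp only [containsCopy_pathGraph_three_iff, Set.Nontrivial, SimpleGraph.mem_neighborSet,
    SimpleGraph.sup_adj, SimpleGraph.fromEdgeSet_adj, Set.mem_singleton_iff, Sym2.eq_iff,
    SimpleGraph.mem_support]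
  constructor
  · rintro ⟨u, a, ha, b, hb, hab⟩
    have huniq : H.Adj u a → H.Adj u b → a = b := fun ha hb => hH u ha hb
    grind
  · rintro (⟨u, hu⟩ | ⟨u, hu⟩)
    · exact ⟨v, u, .inl hu, w, by simp [hne], by rintro rfl; exact hvw hu⟩
    · exact ⟨w, u, .inl hu, v, by simp [hne.symm], by rintro rfl; exact hvw hu.symm⟩

theorem isSaturatedIn_pathGraph_three_iff :
    IsSaturatedIn G H (SimpleGraph.pathGraph 3) ↔
      H ≤ G ∧ (∀ v, (H.neighborSet v).Subsingleton) ∧ G.IsIndepSet H.supportᶜ := by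
  have hfree : ¬ ContainsCopy (SimpleGraph.pathGraph 3) H ↔
      ∀ v, (H.neighborSet v).Subsingleton := by
    simp only [containsCopy_pathGraph_three_iff, not_exists, Set.not_nontrivial_iff]
  rw [IsSaturatedIn, hfree]
  refine and_congr_right fun _ => and_congr_right fun hH => ?_
  constructor
  · intro hsat v hv w hw hne hvw
    have hHvw : ¬ H.Adj v w := fun h => hv h.mem_support_left
    exact ((containsCopy_pathGraph_three_sup_edge_iff hH hne hHvw).1 (hsat v w hvw hHvw)).elim hv hw
  · intro hind v w hvw hHvw
    refine (containsCopy_pathGraph_three_sup_edge_iff hH hvw.ne hHvw).2 ?_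
    by_contra! hvw'
    exact hind hvw'.1 hvw'.2 hvw.ne hvw

theorem two_mul_ncard_edgeSet_of_subsingleton_neighborSet [Finite V]
    (hH : ∀ v, (H.neighborSet v).Subsingleton) : 2 * H.edgeSet.ncard = H.support.ncard := by
  classical
  have := Fintype.ofFinite V
  have hdegree : ∀ v ∈ H.support.toFinset, H.degree v = 1 := by
    intro v hv
    obtain ⟨w, hw⟩ := Set.mem_toFinset.1 hv
    rw [← SimpleGraph.card_neighborSet_eq_degree, Fintype.card_eq_one_iff]
    exact ⟨⟨w, hw⟩, fun u => Subtype.ext (hH v u.2 hw)⟩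
  calc 2 * H.edgeSet.ncard = 2 * H.edgeFinset.card := by
        rw [← SimpleGraph.coe_edgeFinset, Set.ncard_coe_finset]
    _ = ∑ v ∈ H.support.toFinset, H.degree v := H.sum_degrees_support_eq_twice_card_edges.symm
    _ = H.support.ncard := by
        rw [Finset.sum_congr rfl hdegree, Set.ncard_eq_toFinset_card', Finset.card_eq_sum_ones]

theorem indepNum_eq_simpleGraph_indepNum [Finite V] : indepNum G = G.indepNum := by
  unfold indepNum SimpleGraph.indepNum
  congr 1 with k
  constructor
  · rintro ⟨s, hs, rfl⟩
    exact ⟨s.toFinite.toFinset, by simpa using hs, (Set.ncard_eq_toFinset_card s).symm⟩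
  · rintro ⟨s, hs, rfl⟩
    exact ⟨s, hs, Set.ncard_coe_finset s⟩

theorem ncard_le_indepNum [Finite V] {s : Set V} (hs : G.IsIndepSet s) :
    s.ncard ≤ indepNum G := by
  have := Fintype.ofFinite V
  rw [indepNum_eq_simpleGraph_indepNum, Set.ncard_eq_toFinset_card s]
  exact SimpleGraph.IsIndepSet.card_le_indepNum (by simpa using hs)

theorem exists_isIndepSet_ncard_eq_indepNum [Finite V] (G : SimpleGraph V) :
    ∃ s : Set V, G.IsIndepSet s ∧ s.ncard = indepNum G := by
  have := Fintype.ofFinite V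
  obtain ⟨s, hs, hcard⟩ := G.exists_isNIndepSet_indepNum
  exact ⟨s, hs, by rw [Set.ncard_coe_finset, hcard, indepNum_eq_simpleGraph_indepNum]⟩

theorem IsSaturatedIn.card_le_two_mul_ncard_edgeSet_add_indepNum [Finite V]
    (hH : IsSaturatedIn G H (SimpleGraph.pathGraph 3)) :
    Nat.card V ≤ 2 * H.edgeSet.ncard + indepNum G := by
  obtain ⟨-, hmatch, hind⟩ := isSaturatedIn_pathGraph_three_iff.1 hH
  rw [two_mul_ncard_edgeSet_of_subsingleton_neighborSet hmatch,
    ← Set.ncard_add_ncard_compl H.support]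
  gcongr
  exact ncard_le_indepNum hind

theorem exists_isSaturatedIn_of_isMatching [Finite V] {M : G.Subgraph} (hM : M.IsMatching)
    (hind : G.IsIndepSet M.vertsᶜ) :
    ∃ H, IsSaturatedIn G H (SimpleGraph.pathGraph 3) ∧ 2 * H.edgeSet.ncard = M.verts.ncard := by
  have hsupp : M.spanningCoe.support = M.verts := hM.support_eq_verts
  have hsub (v : V) : (M.spanningCoe.neighborSet v).Subsingleton :=
    fun _ ha _ hb => hM.eq_of_adj_left ha hb
  exact ⟨M.spanningCoe, isSaturatedIn_pathGraph_three_iff.2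
    ⟨M.spanningCoe_le, hsub, by rwa [hsupp]⟩,
    by rw [two_mul_ncard_edgeSet_of_subsingleton_neighborSet hsub, hsupp]⟩

theorem indepNum_pos [Finite V] [Nonempty V] (G : SimpleGraph V) : 0 < indepNum G := by
  inhabit V
  simpa [Nat.one_le_iff_ne_zero, Nat.pos_iff_ne_zero] using
    ncard_le_indepNum (G := G) (Set.pairwise_singleton (default : V) _)

theorem exists_isIndepSet_compl_ncard_eq [Finite V] (G : SimpleGraph V) :
    ∃ U : Set V, G.IsIndepSet Uᶜ ∧ U.ncard = 2 * ((Nat.card V - indepNum G + 1) / 2) := by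
  obtain ⟨I, hI, hIcard⟩ := exists_isIndepSet_ncard_eq_indepNum G
  have hle : I.ncard ≤ Nat.card V := Set.ncard_le_card I
  have hpos : 0 < Nat.card V → 0 < indepNum G := fun h =>
    have := (Nat.card_pos_iff.1 h).1
    indepNum_pos G
  obtain ⟨S, hSI, hS⟩ := Set.exists_subset_card_eq
    (show Nat.card V - 2 * ((Nat.card V - indepNum G + 1) / 2) ≤ I.ncard by omega)
  refine ⟨Sᶜ, by simpa using hI.mono hSI, ?_⟩
  rw [Set.ncard_compl, hS]
  omega

end Saturation

section BipartiteHole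

variable {V W : Type*} {G : SimpleGraph V} {k : ℕ}

/-- A (balanced) bipartite hole of size `k`: two disjoint sets of `k` vertices with no edge
of `G` between them. -/
def HasBipartiteHole (G : SimpleGraph V) (k : ℕ) : Prop :=
  ∃ A B : Finset V, A.card = k ∧ B.card = k ∧ Disjoint A B ∧ ∀ a ∈ A, ∀ b ∈ B, ¬ G.Adj a b

theorem HasBipartiteHole.of_le_ncard [Finite V] {A B : Set V} (hA : k ≤ A.ncard)
    (hB : k ≤ B.ncard) (hAB : Disjoint A B) (hadj : ∀ a ∈ A, ∀ b ∈ B, ¬ G.Adj a b) :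
    HasBipartiteHole G k := by
  have := Fintype.ofFinite V
  classical
  rw [Set.ncard_eq_toFinset_card'] at hA hB
  obtain ⟨A', hA', rfl⟩ := Finset.exists_subset_card_eq hA
  obtain ⟨B', hB', hcard⟩ := Finset.exists_subset_card_eq hB
  exact ⟨A', B', rfl, hcard, (Set.disjoint_toFinset.2 hAB).mono hA' hB', fun a ha b hb =>
    hadj a (Set.mem_toFinset.1 (hA' ha)) b (Set.mem_toFinset.1 (hB' hb))⟩

theorem HasBipartiteHole.map {G' : SimpleGraph W} (f : G ↪g G') (h : HasBipartiteHole G k) :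
    HasBipartiteHole G' k := by
  obtain ⟨A, B, hA, hB, hAB, hadj⟩ := h
  refine ⟨A.map f.toEmbedding, B.map f.toEmbedding, by simpa, by simpa, by simpa, ?_⟩
  simpa [f.map_adj_iff] using hadj

theorem HasBipartiteHole.of_isIndepSet [Finite V] {s : Set V} (hs : G.IsIndepSet s)
    (hcard : 2 * k ≤ s.ncard) : HasBipartiteHole G k := by
  obtain ⟨A, hAs, hA⟩ := Set.exists_subset_card_eq (show k ≤ s.ncard by omega)
  refine .of_le_ncard hA.ge ?_ Set.disjoint_sdiff_right fun a ha b hb =>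
    hs (hAs ha) hb.1 fun hab => hb.2 (hab ▸ ha)
  rw [Set.ncard_sdiff hAs]
  omega

theorem card_connectedComponent_lt_of_not_hasBipartiteHole [Finite V]
    (hG : ¬ HasBipartiteHole G k) : Nat.card G.ConnectedComponent < 2 * k := by
  by_contra! hcard
  obtain ⟨r, hr⟩ : ∃ r, Function.RightInverse r G.connectedComponentMk :=
    Function.Surjective.hasRightInverse Quot.mk_surjective
  refine hG (.of_isIndepSet (s := Set.range r) ?_ ?_)
  · rintro _ ⟨C, rfl⟩ _ ⟨D, rfl⟩ hne hadj
    refine hne (congrArg r ?_)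
    rw [← hr C, ← hr D]
    exact SimpleGraph.ConnectedComponent.sound hadj.reachable
  · rwa [Set.ncard_range_of_injective hr.injective]

theorem preconnected_of_not_hasBipartiteHole [Finite V] (hG : ¬ HasBipartiteHole G k)
    (hdeg : ∀ v, k ≤ (G.neighborSet v).ncard) : G.Preconnected := by
  intro v w
  by_contra hvw
  refine hG (.of_le_ncard (hdeg v) (hdeg w) ?_ ?_)
  · rw [Set.disjoint_left]
    intro u (hvu : G.Adj v u) (hwu : G.Adj w u)
    exact hvw (hvu.reachable.trans hwu.reachable.symm)
  · intro a (hva : G.Adj v a) b (hwb : G.Adj w b) hab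
    exact hvw (hva.reachable.trans (hab.reachable.trans hwb.reachable.symm))

theorem ncard_neighborSet_le_induce_add_ncard_compl [Finite V] (U : Set V) (v : U) :
    (G.neighborSet v).ncard ≤ ((G.induce U).neighborSet v).ncard + Uᶜ.ncard := by
  have hsub : G.neighborSet v ⊆ Subtype.val '' (G.induce U).neighborSet v ∪ Uᶜ := by
    intro w hw
    by_cases hwU : w ∈ U
    · exact .inl ⟨⟨w, hwU⟩, hw, rfl⟩
    · exact .inr hwU
  calc (G.neighborSet v).ncard
      ≤ (Subtype.val '' (G.induce U).neighborSet v ∪ Uᶜ).ncard := Set.ncard_le_ncard hsub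
    _ ≤ (Subtype.val '' (G.induce U).neighborSet v).ncard + Uᶜ.ncard := Set.ncard_union_le _ _
    _ = ((G.induce U).neighborSet v).ncard + Uᶜ.ncard := by
      rw [Set.ncard_image_of_injective _ Subtype.val_injective]

theorem isTutteViolator_iff {S : Set V} :
    G.IsTutteViolator S ↔ S.ncard < (G.induce Sᶜ).oddComponents.ncard := by
  rw [Set.compl_eq_univ_sdiff, SimpleGraph.induce_eq_coe_induce_top]
  rfl

theorem exists_isPerfectMatching_of_not_hasBipartiteHole [Finite V] (hV : Even (Nat.card V))
    (hG : ¬ HasBipartiteHole G k) (hdeg : ∀ v, 3 * k ≤ (G.neighborSet v).ncard) :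
    ∃ M : G.Subgraph, M.IsPerfectMatching := by
  refine SimpleGraph.tutte.2 fun S hS => ?_
  rw [isTutteViolator_iff] at hS
  have hGS : ¬ HasBipartiteHole (G.induce Sᶜ) k := fun h => hG (h.map (.induce _))
  have hodd : (G.induce Sᶜ).oddComponents.ncard ≤ Nat.card (G.induce Sᶜ).ConnectedComponent :=
    Set.ncard_le_card _
  have hcomp := card_connectedComponent_lt_of_not_hasBipartiteHole hGS
  have hconn : (G.induce Sᶜ).Preconnected := by
    refine preconnected_of_not_hasBipartiteHole hGS fun v => ?_
    have hv := ncard_neighborSet_le_induce_add_ncard_compl (G := G) Sᶜ v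
    rw [compl_compl] at hv
    have := hdeg v
    omega
  have hone : Nat.card (G.induce Sᶜ).ConnectedComponent ≤ 1 :=
    Finite.card_le_one_iff_subsingleton.2 hconn.subsingleton_connectedComponent
  obtain rfl : S = ∅ := (Set.ncard_eq_zero).1 (by omega)
  have hodd_one : (G.induce (∅ : Set V)ᶜ).oddComponents.ncard = 1 := by omega
  have hVodd := (SimpleGraph.odd_ncard_oddComponents _).1 (hodd_one ▸ odd_one)
  rw [Nat.card_coe_set_eq, Set.compl_empty, Set.ncard_univ] at hVodd
  exact Nat.not_odd_iff_even.2 hV hVodd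

theorem exists_isMatching_verts_eq_of_isPerfectMatching_induce {U : Set V}
    {M : (G.induce U).Subgraph} (hM : M.IsPerfectMatching) :
    ∃ M' : G.Subgraph, M'.IsMatching ∧ M'.verts = U :=
  ⟨M.map (SimpleGraph.Embedding.induce U).toHom, hM.1.map _ Subtype.val_injective, by
    rw [SimpleGraph.Subgraph.map_verts, hM.2.verts_eq_univ, Set.image_univ]
    exact Subtype.range_coe⟩

theorem isLeast_ncard_edgeSet_isSaturatedIn_pathGraph_three [Finite V]
    (hG : ¬ HasBipartiteHole G k) (hdeg : ∀ v, 5 * k ≤ (G.neighborSet v).ncard) :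
    IsLeast {m | ∃ H, IsSaturatedIn G H (SimpleGraph.pathGraph 3) ∧ H.edgeSet.ncard = m}
      ((Nat.card V - indepNum G + 1) / 2) := by
  constructor
  · obtain ⟨U, hUind, hU⟩ := exists_isIndepSet_compl_ncard_eq G
    have hUcompl : Uᶜ.ncard < 2 * k := by
      by_contra! h
      exact hG (.of_isIndepSet hUind h)
    obtain ⟨M, hM⟩ := exists_isPerfectMatching_of_not_hasBipartiteHole (G := G.induce U) (k := k)
      (by rw [Nat.card_coe_set_eq, hU]; exact even_two_mul _)
      (fun h => hG (h.map (.induce _))) fun v => by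
        have := ncard_neighborSet_le_induce_add_ncard_compl (G := G) U v
        have := hdeg v
        omega
    obtain ⟨M', hM', hverts⟩ := exists_isMatching_verts_eq_of_isPerfectMatching_induce hM
    obtain ⟨H, hH, hcard⟩ := exists_isSaturatedIn_of_isMatching hM' (by rwa [hverts])
    exact ⟨H, hH, by rw [hverts, hU] at hcard; omega⟩
  · rintro _ ⟨H, hH, rfl⟩
    have := hH.card_le_two_mul_ncard_edgeSet_add_indepNum
    omega

theorem satNum_pathGraph_three_eq [Finite V]
    (hG : ¬ HasBipartiteHole G k) (hdeg : ∀ v, 5 * k ≤ (G.neighborSet v).ncard) :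
    satNum G (SimpleGraph.pathGraph 3) = (Nat.card V - indepNum G + 1) / 2 :=
  (isLeast_ncard_edgeSet_isSaturatedIn_pathGraph_three hG hdeg).csInf_eq

end BipartiteHole

section RandomGraph

open scoped unitInterval

variable {n : ℕ} {p : I}

instance (n : ℕ) (p : ℝ) : IsProbabilityMeasure (erMeasure n p) := by
  unfold erMeasure
  infer_instance

theorem erMeasure_forall_eq_false (S : Finset (EdgeType n)) :
    erMeasure n p {ω | ∀ e ∈ S, ω e = false} = ENNReal.ofReal (σ p) ^ S.card := by
  classical
  have hset : {ω : EdgeType n → Bool | ∀ e ∈ S, ω e = false} =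
      Set.univ.pi fun e => if e ∈ S then {false} else Set.univ := by
    ext ω
    simp only [Set.mem_ofPred_eq, Set.mem_univ_pi]
    refine forall_congr' fun e => ?_
    split_ifs <;> simp [*]
  rw [erMeasure, hset, Measure.pi_pi]
  simp only [apply_ite, measure_univ, Finset.prod_ite_mem, Finset.univ_inter, Finset.prod_const]
  rw [PMF.toMeasure_apply_singleton _ _ (measurableSet_singleton _), PMF.bernoulli_apply]
  congr 1
  simp [min_eq_left (Real.toNNReal_le_one.2 p.2.2), ENNReal.ofReal_sub _ p.2.1,
    ENNReal.ofNNReal_toNNReal]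

theorem graphOf_adj {ω : EdgeType n → Bool} {a b : Fin n} :
    (graphOf ω).Adj a b ↔ ∃ h : a ≠ b, ω ⟨s(a, b), by simpa⟩ = true := by
  simp only [graphOf, SimpleGraph.fromEdgeSet_adj, Set.mem_ofPred_eq]
  exact ⟨fun ⟨⟨_, h⟩, hne⟩ => ⟨hne, h⟩, fun ⟨hne, h⟩ => ⟨⟨by simpa, h⟩, hne⟩⟩

theorem erMeasure_forall_not_adj {A B : Finset (Fin n)} (hAB : Disjoint A B) :
    erMeasure n p {ω | ∀ a ∈ A, ∀ b ∈ B, ¬ (graphOf ω).Adj a b} =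
      ENNReal.ofReal (σ p) ^ (A.card * B.card) := by
  have hne {a b} (ha : a ∈ A) (hb : b ∈ B) : a ≠ b := fun h =>
    Finset.disjoint_left.1 hAB ha (h ▸ hb)
  have hinj : Set.InjOn (fun x : Fin n × Fin n => s(x.1, x.2)) (A ×ˢ B : Finset _) := by
    rintro ⟨a, b⟩ hab ⟨c, d⟩ hcd heq
    simp only [Finset.coe_product, Set.mem_prod, Finset.mem_coe] at hab hcd
    rcases Sym2.eq_iff.1 heq with ⟨rfl, rfl⟩ | ⟨rfl, rfl⟩
    · rfl
    · exact absurd rfl (hne hab.1 hcd.2)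
  let S : Finset (EdgeType n) := ((A ×ˢ B).image fun x => s(x.1, x.2)).subtype (¬ ·.IsDiag)
  have hcard : S.card = A.card * B.card := by
    rw [Finset.card_subtype, Finset.filter_true_of_mem, Finset.card_image_of_injOn hinj,
      Finset.card_product]
    simp only [Finset.mem_image, Finset.mem_product]
    rintro _ ⟨⟨a, b⟩, hab, rfl⟩
    simpa using hne hab.1 hab.2
  rw [← hcard, ← erMeasure_forall_eq_false]
  congr 1 with ω
  simp only [Set.mem_ofPred_eq, graphOf_adj, not_exists, Bool.not_eq_true]
  constructor
  · rintro hω ⟨e, he⟩ heS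
    obtain ⟨⟨a, b⟩, hab, rfl⟩ := Finset.mem_image.1 (Finset.mem_subtype.1 heS)
    rw [Finset.mem_product] at hab
    exact hω a hab.1 b hab.2 (hne hab.1 hab.2)
  · intro hω a ha b hb h
    exact hω _ (Finset.mem_subtype.2 (Finset.mem_image.2 ⟨(a, b), by simp [ha, hb], rfl⟩))

theorem erMeasure_exists_forall_not_adj_le {P : Finset (Finset (Fin n) × Finset (Fin n))} {m : ℕ}
    (hdisj : ∀ x ∈ P, Disjoint x.1 x.2) (hm : ∀ x ∈ P, m = x.1.card * x.2.card) :
    erMeasure n p {ω | ∃ x ∈ P, ∀ a ∈ x.1, ∀ b ∈ x.2, ¬ (graphOf ω).Adj a b} ≤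
      P.card * ENNReal.ofReal (σ p) ^ m := by
  have hunion : {ω : EdgeType n → Bool | ∃ x ∈ P, ∀ a ∈ x.1, ∀ b ∈ x.2, ¬ (graphOf ω).Adj a b} =
      ⋃ x ∈ P, {ω | ∀ a ∈ x.1, ∀ b ∈ x.2, ¬ (graphOf ω).Adj a b} := by
    ext
    simp
  rw [hunion, ← nsmul_eq_mul]
  refine (measure_biUnion_finset_le _ _).trans (Finset.sum_le_card_nsmul _ _ _ fun x hx => ?_)
  rw [erMeasure_forall_not_adj (hdisj x hx), hm x hx]

theorem erMeasure_hasBipartiteHole_le (n k : ℕ) (p : I) :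
    erMeasure n p {ω | HasBipartiteHole (graphOf ω) k} ≤
      (n ^ 2 * ENNReal.ofReal (σ p) ^ k) ^ k := by
  let T : Finset (Finset (Fin n)) := Finset.univ.powersetCard k
  let P := (T ×ˢ T).filter fun x => Disjoint x.1 x.2
  have hP {x} : x ∈ P ↔ (x.1.card = k ∧ x.2.card = k) ∧ Disjoint x.1 x.2 := by simp [P, T]
  have hcard : P.card ≤ n ^ k * n ^ k := by
    have hT : T.card ≤ n ^ k := by simpa [T] using Nat.choose_le_pow n k
    calc P.card ≤ (T ×ˢ T).card := Finset.card_filter_le _ _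
      _ = T.card * T.card := Finset.card_product _ _
      _ ≤ n ^ k * n ^ k := Nat.mul_le_mul hT hT
  calc erMeasure n p {ω | HasBipartiteHole (graphOf ω) k}
      ≤ erMeasure n p {ω | ∃ x ∈ P, ∀ a ∈ x.1, ∀ b ∈ x.2, ¬ (graphOf ω).Adj a b} :=
        measure_mono fun ω ⟨A, B, hA, hB, hAB, hadj⟩ =>
          ⟨(A, B), hP.2 ⟨⟨hA, hB⟩, hAB⟩, hadj⟩
    _ ≤ P.card * ENNReal.ofReal (σ p) ^ (k * k) :=
        erMeasure_exists_forall_not_adj_le (fun x hx => (hP.1 hx).2) fun x hx => by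
          rw [(hP.1 hx).1.1, (hP.1 hx).1.2]
    _ ≤ (n ^ k * n ^ k : ℕ) * ENNReal.ofReal (σ p) ^ (k * k) := by gcongr
    _ = (n ^ 2 * ENNReal.ofReal (σ p) ^ k) ^ k := by push_cast; ring

theorem erMeasure_exists_ncard_neighborSet_lt_le {d : ℕ} (hd : d ≤ n) :
    erMeasure n p {ω | ∃ v, ((graphOf ω).neighborSet v).ncard < d} ≤
      n ^ (d + 1) * ENNReal.ofReal (σ p) ^ (n - d) := by
  let T : Finset (Fin n × Finset (Fin n)) := Finset.univ ×ˢ Finset.univ.powersetCard d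
  let P := (T.filter fun x => x.1 ∈ x.2).image fun x => (({x.1} : Finset (Fin n)), x.2ᶜ)
  have hcard : P.card ≤ n ^ (d + 1) := by
    calc P.card ≤ T.card := Finset.card_image_le.trans (Finset.card_filter_le _ _)
      _ = n * n.choose d := by simp [T]
      _ ≤ n * n ^ d := Nat.mul_le_mul_left n (Nat.choose_le_pow n d)
      _ = n ^ (d + 1) := (pow_succ' n d).symm
  calc erMeasure n p {ω | ∃ v, ((graphOf ω).neighborSet v).ncard < d}
      ≤ erMeasure n p {ω | ∃ x ∈ P, ∀ a ∈ x.1, ∀ b ∈ x.2, ¬ (graphOf ω).Adj a b} := by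
        -- `v` has no edge to the complement of any `D` containing its closed neighbourhood.
        classical
        refine measure_mono fun ω ⟨v, hv⟩ => ?_
        have hclosed : (insert v ((graphOf ω).neighborSet v)).toFinset.card ≤ d := by
          rw [← Set.ncard_eq_toFinset_card']
          exact (Set.ncard_insert_le _ _).trans hv
        obtain ⟨D, hD, hDcard⟩ := Finset.exists_superset_card_eq hclosed (by simpa using hd)
        refine ⟨({v}, Dᶜ), Finset.mem_image.2 ⟨(v, D), ?_, rfl⟩, ?_⟩
        · simp [T, hDcard, hD (Set.mem_toFinset.2 (Set.mem_insert v _))]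
        · rintro a ha b hb hab
          obtain rfl := Finset.mem_singleton.1 ha
          exact Finset.mem_compl.1 hb (hD (Set.mem_toFinset.2 (.inr hab)))
    _ ≤ P.card * ENNReal.ofReal (σ p) ^ (n - d) := by
        refine erMeasure_exists_forall_not_adj_le (fun x hx => ?_) fun x hx => ?_ <;>
          obtain ⟨⟨v, D⟩, hvD, rfl⟩ := Finset.mem_image.1 hx <;>
          simp_all [T, Finset.card_compl]
    _ ≤ (n ^ (d + 1) : ℕ) * ENNReal.ofReal (σ p) ^ (n - d) := by gcongr
    _ = n ^ (d + 1) * ENNReal.ofReal (σ p) ^ (n - d) := by push_cast; rfl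

theorem erMeasure_satNum_ne_le {k : ℕ} (hk : k ≠ 0) (hkn : 5 * k ^ 2 + 6 * k ≤ n)
    (hsmall : n ^ 2 * ENNReal.ofReal (σ p) ^ k ≤ 1) :
    erMeasure n p {ω | satNum (graphOf ω) (SimpleGraph.pathGraph 3) =
        (n - indepNum (graphOf ω) + 1) / 2}ᶜ ≤ 2 * (n ^ 2 * ENNReal.ofReal (σ p) ^ k) := by
  have hq : ENNReal.ofReal (σ p) ≤ 1 := ENNReal.ofReal_le_one.2 (σ p).2.2
  have hhole := (erMeasure_hasBipartiteHole_le n k p).trans (pow_le_of_le_one zero_le hsmall hk)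
  have hdeg : erMeasure n p {ω | ∃ v, ((graphOf ω).neighborSet v).ncard < 5 * k} ≤
      n ^ 2 * ENNReal.ofReal (σ p) ^ k := by
    calc erMeasure n p {ω | ∃ v, ((graphOf ω).neighborSet v).ncard < 5 * k}
        ≤ n ^ (5 * k + 1) * ENNReal.ofReal (σ p) ^ (n - 5 * k) :=
          erMeasure_exists_ncard_neighborSet_lt_le (by omega)
      _ ≤ (n ^ 2) ^ (5 * k + 1) * ENNReal.ofReal (σ p) ^ (k * (5 * k + 1)) := by
          gcongr ?_ * ?_
          · gcongr
            exact_mod_cast Nat.le_self_pow two_ne_zero n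
          · exact pow_le_pow_of_le_one zero_le hq (by have := sq k; grind)
      _ = (n ^ 2 * ENNReal.ofReal (σ p) ^ k) ^ (5 * k + 1) := by rw [mul_pow, pow_mul]
      _ ≤ n ^ 2 * ENNReal.ofReal (σ p) ^ k := pow_le_of_le_one zero_le hsmall (by omega)
  rw [two_mul]
  refine (measure_mono ?_).trans ((measure_union_le _ _).trans (add_le_add hhole hdeg))
  intro ω hω
  by_contra! hgood
  simp only [Set.mem_union, Set.mem_ofPred_eq, not_or, not_exists, not_lt] at hgood
  exact hω (by simpa using satNum_pathGraph_three_eq hgood.1 hgood.2)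

theorem sq_mul_symm_pow_le {k : ℕ} (hn : n ≠ 0) (hk : √n ≤ 3 * (k + 1))
    (hp : 9 * log n ≤ p * √n) : (n : ℝ) ^ 2 * (σ p : ℝ) ^ k ≤ exp 1 / n := by
  have hn' : (0 : ℝ) < n := by positivity
  -- Up to the rounding of `k`, this is `p * k ≥ p * √n / 3 ≥ 3 * log n`, hence the factor `9`.
  have hexp : (p : ℝ) * √n ≤ 3 * (k * p) + 3 := by
    calc (p : ℝ) * √n ≤ p * (3 * (k + 1)) := by have := p.2.1; gcongr
      _ = 3 * (k * p) + 3 * p := by ring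
      _ ≤ 3 * (k * p) + 3 := by linarith [p.2.2]
  calc (n : ℝ) ^ 2 * (σ p : ℝ) ^ k ≤ exp (log n) ^ 2 * exp (-p) ^ k := by
        rw [exp_log hn']
        gcongr
        · exact (σ p).2.1
        · exact one_sub_le_exp_neg _
    _ = exp (2 * log n - k * p) := by
        rw [← exp_nat_mul, ← exp_nat_mul, ← exp_add]
        push_cast
        ring_nf
    _ ≤ exp (1 - log n) := exp_le_exp.2 (by linarith)
    _ = exp 1 / n := by rw [exp_sub, exp_log hn']

theorem erMeasure_satNum_ne_le_div (hn : 36 ≤ n) (hp : 9 * log n ≤ p * √n) :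
    erMeasure n p {ω | satNum (graphOf ω) (SimpleGraph.pathGraph 3) =
        (n - indepNum (graphOf ω) + 1) / 2}ᶜ ≤ 2 * ENNReal.ofReal (exp 1 / n) := by
  let k := Nat.sqrt n / 3
  have hk : 2 ≤ k := (Nat.le_div_iff_mul_le (by norm_num)).2 (Nat.le_sqrt.2 hn)
  have hkn : 5 * k ^ 2 + 6 * k ≤ n := by
    calc 5 * k ^ 2 + 6 * k ≤ (k * 3) * (k * 3) := by nlinarith
      _ ≤ Nat.sqrt n * Nat.sqrt n := by gcongr <;> exact Nat.div_mul_le_self _ _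
      _ ≤ n := Nat.sqrt_le n
  have hsqrt : √n ≤ 3 * (k + 1) := by
    calc √n ≤ Nat.sqrt n + 1 := Real.real_sqrt_le_nat_sqrt_succ
      _ ≤ 3 * (k + 1) := by
        have : Nat.sqrt n + 1 ≤ 3 * (k + 1) := by omega
        exact_mod_cast this
  have hbound : n ^ 2 * ENNReal.ofReal (σ p) ^ k ≤ ENNReal.ofReal (exp 1 / n) := by
    rw [← ENNReal.ofReal_natCast, ← ENNReal.ofReal_pow (by positivity),
      ← ENNReal.ofReal_pow (σ p).2.1, ← ENNReal.ofReal_mul (by positivity)]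
    exact ENNReal.ofReal_le_ofReal (sq_mul_symm_pow_le (by omega) hsqrt hp)
  have hle_one : ENNReal.ofReal (exp 1 / n) ≤ 1 := by
    have : (36 : ℝ) ≤ n := by exact_mod_cast hn
    rw [ENNReal.ofReal_le_one, div_le_one (by positivity)]
    linarith [exp_one_lt_three]
  exact (erMeasure_satNum_ne_le (by omega) hkn (hbound.trans hle_one)).trans (by gcongr)

theorem eventually_mul_log_le_mul_sqrt {c p : ℝ} (hc : 0 < c) (hp : 0 < p) :
    ∀ᶠ n : ℕ in atTop, c * log n ≤ p * √n := by
  have hlittleO := (isLittleO_log_rpow_atTop (r := 1 / 2) (by norm_num)).comp_tendsto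
    tendsto_natCast_atTop_atTop
  filter_upwards [hlittleO.bound (div_pos hp hc)] with n hn
  simp only [Function.comp_apply, Real.norm_eq_abs, ← sqrt_eq_rpow,
    abs_of_nonneg (sqrt_nonneg _)] at hn
  calc c * log n ≤ c * (p / c * √n) := by gcongr; exact (le_abs_self _).trans hn
    _ = p * √n := by field_simp

theorem star_two_saturation_general (p : ℕ → I)
    (hp : ∀ᶠ n : ℕ in atTop, 9 * log n ≤ p n * √n) :
    Tendsto (fun n : ℕ =>
      erMeasure n (p n) {ω |
        satNum (graphOf ω) (SimpleGraph.pathGraph 3)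
          = (n - indepNum (graphOf ω) + 1) / 2})
      atTop (nhds 1) := by
  have hdiv : Tendsto (fun n : ℕ => 2 * ENNReal.ofReal (exp 1 / n)) atTop (nhds 0) := by
    simpa using ENNReal.Tendsto.const_mul
      (ENNReal.tendsto_ofReal (tendsto_const_div_atTop_nhds_zero_nat (exp 1)))
      (.inr (ENNReal.ofNat_ne_top (n := 2)))
  have hlower := ENNReal.Tendsto.sub (tendsto_const_nhds (x := (1 : ENNReal))) hdiv (.inr (by simp))
  rw [tsub_zero] at hlower
  refine tendsto_of_tendsto_of_tendsto_of_le_of_le' hlower tendsto_const_nhds ?_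
    (.of_forall fun n => prob_le_one)
  filter_upwards [hp, eventually_ge_atTop 36] with n hpn hn
  rw [tsub_le_iff_tsub_le, ← prob_compl_eq_one_sub (.of_discrete)]
  exact erMeasure_satNum_ne_le_div hn hpn

end RandomGraph

/-- For fixed `p ∈ (0,1)`, whp
`sat(G(n,p), K_{1,2}) = ⌈(n − α(G(n,p)))/2⌉`.  (`K_{1,2}` is the path on 3
vertices; `⌈k/2⌉ = (k+1)/2` in natural-number division.) -/
theorem star_two_saturation (p : ℝ) (hp0 : 0 < p) (hp1 : p < 1) :
    Tendsto (fun n : ℕ =>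
      erMeasure n p {ω |
        satNum (graphOf ω) (SimpleGraph.pathGraph 3)
          = (n - indepNum (graphOf ω) + 1) / 2})
      atTop (nhds 1) := by
  exact star_two_saturation_general (fun _ => ⟨p, hp0.le, hp1.le⟩)
    (eventually_mul_log_le_mul_sqrt (by norm_num) hp0)
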